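/- Let R be a polynomial in M variables with real nonnegative coefficients and let ξ = (ξ_1, …, ξ_M) be a vector of positive rational numbers. Let L be the set of positive integers ℓ with ξ_r ℓ ∈ ℤ for all r and Coeff[R^ℓ, x_1^{ξ_1 ℓ} ⋯ x_M^{ξ_M ℓ}] > 0, and assume L is nonempty. Suppose x_0 = (x_{0,1}, …, x_{0,M}) is a vector of strictly positive reals satisfying x_{0,r} · ∂R/∂x_r(x_0) = ξ_r · R(x_0) for each r = 1, …, M. Then the limit, as ℓ → ∞ along ℓ ∈ L, of (1/ℓ) · log Coeff[R^ℓ, x_1^{ξ_1 ℓ} ⋯ x_M^{ξ_M ℓ}] exists and equals log R(x_0) − Σ_{r=1}^M ξ_r log x_{0,r}. -/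

import Mathlib

open MvPolynomial Filter

theorem exists_seq_ratLinearMap_tendsto_id :
    ∃ f : ℕ → ℝ →ₗ[ℚ] ℚ, (∀ x, Tendsto (fun t => (f t x : ℝ)) atTop (nhds x)) ∧
      ∀ᶠ t in atTop, f t 1 = 1 := by
  let b := Module.Free.chooseBasis ℚ ℝ
  choose e he using fun x : ℝ => Real.exists_seq_rat_strictMono_tendsto x
  let g : ℕ → ℝ →ₗ[ℚ] ℚ := fun t => b.constr ℚ fun j => e (b j) t
  have hg : ∀ x, Tendsto (fun t => (g t x : ℝ)) atTop (nhds x) := by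
    intro x
    have hx : x = ∑ j ∈ (b.repr x).support, (b.repr x j : ℝ) * b j := by
      conv_lhs => rw [← b.linearCombination_repr x, Finsupp.linearCombination_apply, Finsupp.sum]
      simp [Rat.smul_def]
    have hgx : (fun t => (g t x : ℝ)) =
        fun t => ∑ j ∈ (b.repr x).support, (b.repr x j : ℝ) * (e (b j) t : ℝ) := by
      funext t
      simp [g, Module.Basis.constr_apply, Finsupp.sum]
    rw [hgx]
    conv => enter [3]; rw [hx]
    exact tendsto_finsetSum _ fun j _ => (he (b j)).2.2.const_mul _
  refine ⟨fun t => (g t 1)⁻¹ • g t, fun x => ?_, ?_⟩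
  · simpa using ((hg 1).inv₀ one_ne_zero).mul (hg x)
  · filter_upwards [(hg 1).eventually_ne one_ne_zero] with t ht
    have : g t 1 ≠ 0 := by exact_mod_cast ht
    simp [this]

theorem tendsto_log_factorial_sub_div :
    Tendsto (fun n : ℕ => (Real.log n.factorial - (n * Real.log n - n)) / n) atTop (nhds 0) := by
  have h1 : Tendsto (fun n : ℕ => Real.log (Stirling.stirlingSeq n) / n) atTop (nhds 0) :=
    (Stirling.tendsto_stirlingSeq_sqrt_pi.log (by positivity)).div_atTop
      tendsto_natCast_atTop_atTop
  have h2 : Tendsto (fun n : ℕ => Real.log n / n) atTop (nhds 0) :=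
    (Real.isLittleO_log_id_atTop.tendsto_div_nhds_zero).comp tendsto_natCast_atTop_atTop
  have h3 : Tendsto (fun n : ℕ => Real.log 2 / n) atTop (nhds 0) :=
    tendsto_const_nhds.div_atTop tendsto_natCast_atTop_atTop
  have h := h1.add ((h2.add h3).const_mul (1 / 2))
  simp only [add_zero, mul_zero] at h
  refine h.congr' ?_
  filter_upwards [eventually_gt_atTop 0] with n hn
  have hn' : (n : ℝ) ≠ 0 := by positivity
  rw [Stirling.log_stirlingSeq_formula, Real.log_mul two_ne_zero hn',
    Real.log_div hn' (Real.exp_ne_zero 1), Real.log_exp]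
  field_simp
  ring

theorem tendsto_log_multinomial_div {ι : Type*} (s : Finset ι) (n : ι → ℕ)
    (hn : ∀ i ∈ s, 0 < n i) (hs : s.Nonempty) :
    Tendsto (fun k : ℕ => Real.log (Nat.multinomial s fun i => k * n i) / k) atTop
      (nhds ((∑ i ∈ s, n i : ℕ) * Real.log (∑ i ∈ s, n i : ℕ) -
        ∑ i ∈ s, n i * Real.log (n i))) := by
  have key : ∀ a : ℕ, 0 < a →
      Tendsto (fun k : ℕ => Real.log (k * a).factorial / k - (a * Real.log k - a)) atTop
        (nhds (a * Real.log a)) := by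
    intro a ha
    have h := (tendsto_log_factorial_sub_div.comp
      (tendsto_id.atTop_mul_const' ha)).const_mul (a : ℝ) |>.add_const (a * Real.log a)
    simp only [mul_zero, zero_add] at h
    refine h.congr' ?_
    filter_upwards [eventually_gt_atTop 0] with k hk
    have hk' : (k : ℝ) ≠ 0 := by positivity
    have ha' : (a : ℝ) ≠ 0 := by positivity
    simp only [Function.comp, id, Nat.cast_mul]
    rw [Real.log_mul hk' ha']
    field_simp
    ring
  have h := (key _ (Finset.sum_pos hn hs)).sub (tendsto_finsetSum s fun i hi => key _ (hn i hi))
  refine h.congr fun k => ?_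
  have hspec := Nat.multinomial_spec s fun i => k * n i
  have hlog : Real.log (k * ∑ i ∈ s, n i).factorial = ∑ i ∈ s, Real.log (k * n i).factorial +
      Real.log (Nat.multinomial s fun i => k * n i) := by
    rw [Finset.mul_sum, ← hspec, Nat.cast_mul, Nat.cast_prod, Real.log_mul, Real.log_prod]
    · exact fun i _ => by positivity
    · exact Finset.prod_ne_zero_iff.2 fun i _ => by positivity
    · exact_mod_cast (Nat.multinomial_pos _ _).ne'
  rw [hlog, Finset.sum_sub_distrib, Finset.sum_sub_distrib, ← Finset.sum_mul, ← Finset.sum_div]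
  push_cast
  ring

theorem coeff_pow_nonneg {σ : Type*} {R : MvPolynomial σ ℝ} (hR : ∀ d, 0 ≤ R.coeff d) (ℓ : ℕ)
    (d : σ →₀ ℕ) : 0 ≤ (R ^ ℓ).coeff d := by
  classical
  induction ℓ generalizing d with
  | zero => rw [pow_zero, coeff_one]; split_ifs <;> simp
  | succ k ih =>
    rw [pow_succ, coeff_mul]
    exact Finset.sum_nonneg fun x _ => mul_nonneg (ih _) (hR _)

theorem coeff_mul_coeff_le_coeff_mul {σ : Type*} {P Q : MvPolynomial σ ℝ}
    (hP : ∀ d, 0 ≤ P.coeff d) (hQ : ∀ d, 0 ≤ Q.coeff d) (u v : σ →₀ ℕ) :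
    P.coeff u * Q.coeff v ≤ (P * Q).coeff (u + v) := by
  classical
  rw [coeff_mul]
  exact Finset.single_le_sum (f := fun x : (σ →₀ ℕ) × (σ →₀ ℕ) => P.coeff x.1 * Q.coeff x.2)
    (fun x _ => mul_nonneg (hP _) (hQ _)) (Finset.HasAntidiagonal.mem_antidiagonal.2 (rfl : (u, v).1 + (u, v).2 = _))

theorem coeff_mul_prod_pow_le_eval {σ : Type*} [Fintype σ] {P : MvPolynomial σ ℝ}
    (hP : ∀ d, 0 ≤ P.coeff d) {x : σ → ℝ} (hx : ∀ r, 0 < x r) (v : σ →₀ ℕ) :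
    P.coeff v * ∏ r, x r ^ v r ≤ eval x P := by
  have hnn : ∀ d, 0 ≤ P.coeff d * ∏ r, x r ^ d r := fun d =>
    mul_nonneg (hP d) (Finset.prod_nonneg fun r _ => (pow_pos (hx r) _).le)
  rw [eval_eq']
  by_cases hv : v ∈ P.support
  · exact Finset.single_le_sum (f := fun d => P.coeff d * ∏ r, x r ^ d r) (fun d _ => hnn d) hv
  · rw [notMem_support_iff.1 hv, zero_mul]
    exact Finset.sum_nonneg fun d _ => hnn d

theorem multinomial_mul_prod_coeff_pow_le_coeff_pow {σ : Type*} {R : MvPolynomial σ ℝ}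
    (hR : ∀ d, 0 ≤ R.coeff d) (n : (σ →₀ ℕ) → ℕ) :
    (Nat.multinomial R.support n : ℝ) * ∏ d ∈ R.support, R.coeff d ^ n d ≤
      (R ^ ∑ d ∈ R.support, n d).coeff (∑ d ∈ R.support, n d • d) := by
  classical
  let m : (σ →₀ ℕ) → ℕ := fun d => if d ∈ R.support then n d else 0
  have hm : ∀ d ∈ R.support, m d = n d := fun d hd => if_pos hd
  have hterm : ∀ k : (σ →₀ ℕ) → ℕ, (Nat.multinomial R.support k : MvPolynomial σ ℝ) *
      ∏ d ∈ R.support, monomial d (R.coeff d) ^ k d =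
      monomial (∑ d ∈ R.support, k d • d)
        ((Nat.multinomial R.support k : ℝ) * ∏ d ∈ R.support, R.coeff d ^ k d) := by
    intro k
    simp_rw [monomial_pow]
    rw [← C_mul_monomial, monomial_sum_prod, C_eq_coe_nat]
  have hpow : R ^ (∑ d ∈ R.support, n d) =
      (∑ d ∈ R.support, monomial d (R.coeff d)) ^ (∑ d ∈ R.support, n d) := by
    rw [support_sum_monomial_coeff]
  rw [hpow, Finset.sum_pow_eq_sum_piAntidiag]
  simp_rw [hterm]
  rw [coeff_sum]
  have hle := Finset.single_le_sum (s := Finset.piAntidiag R.support (∑ d ∈ R.support, n d))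
    (f := fun k => coeff (∑ d ∈ R.support, n d • d) (monomial (∑ d ∈ R.support, k d • d)
        ((Nat.multinomial R.support k : ℝ) * ∏ d ∈ R.support, R.coeff d ^ k d))) (a := m) ?_ ?_
  · refine le_trans (le_of_eq ?_) hle
    have h1 : ∑ d ∈ R.support, m d • d = ∑ d ∈ R.support, n d • d :=
      Finset.sum_congr rfl fun d hd => by rw [hm d hd]
    have h2 : ∏ d ∈ R.support, R.coeff d ^ m d = ∏ d ∈ R.support, R.coeff d ^ n d :=
      Finset.prod_congr rfl fun d hd => by rw [hm d hd]
    simp only [h1, h2, coeff_monomial, if_true, Nat.multinomial_congr hm]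
  · intro k _
    simp only [coeff_monomial]
    split_ifs
    · exact mul_nonneg (Nat.cast_nonneg _) (Finset.prod_nonneg fun d _ => pow_nonneg (hR d) _)
    · exact le_rfl
  · rw [Finset.mem_piAntidiag]
    refine ⟨Finset.sum_congr rfl hm, fun d hd => ?_⟩
    by_contra h
    exact hd (if_neg h)

theorem tendsto_div_of_superadditive {L : Set ℕ} {u : ℕ → ℝ} {T : ℝ}
    (hpos : ∀ ℓ ∈ L, 0 < ℓ)
    (hadd : ∀ a ∈ L, ∀ b ∈ L, a + b ∈ L ∧ u a + u b ≤ u (a + b))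
    (hle : ∀ ℓ ∈ L, u ℓ ≤ T * ℓ)
    (happrox : ∀ ε > 0, ∃ m ∈ L, (T - ε) * m ≤ u m) :
    Tendsto (fun ℓ : ℕ => 1 / (ℓ : ℝ) * u ℓ) (atTop ⊓ principal L) (nhds T) := by
  classical
  have hmul : ∀ a ∈ L, ∀ b ∈ L, ∀ q : ℕ, a + q * b ∈ L ∧ u a + q * u b ≤ u (a + q * b) := by
    intro a ha b hb q
    induction q with
    | zero => simpa using ha
    | succ q ih =>
      have h := hadd _ ih.1 b hb
      have e : a + (q + 1) * b = a + q * b + b := by ring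
      rw [e]
      refine ⟨h.1, ?_⟩
      push_cast
      linarith [ih.2, h.2]
  rw [Metric.tendsto_nhds]
  intro ε hε
  obtain ⟨m, hmL, hm⟩ := happrox (ε / 2) (by positivity)
  have hres : ∀ r : ℕ, ∃ C : ℝ, ∀ ℓ ∈ L, ℓ % m = r → (T - ε / 2) * ℓ - C ≤ u ℓ := by
    intro r
    by_cases h : ∃ ℓ ∈ L, ℓ % m = r
    · have hspec := Nat.find_spec h
      set a := Nat.find h
      refine ⟨(T - ε / 2) * a - u a, fun ℓ hℓ hr => ?_⟩
      have hal : a ≤ ℓ := Nat.find_min' h ⟨hℓ, hr⟩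
      obtain ⟨q, hq⟩ : m ∣ ℓ - a := (Nat.modEq_iff_dvd' hal).1 (hspec.2.trans hr.symm)
      have hℓa : ℓ = a + q * m := by rw [mul_comm q m]; omega
      have h1 := (hmul a hspec.1 m hmL q).2
      rw [← hℓa] at h1
      have h2 : (ℓ : ℝ) = a + q * m := by exact_mod_cast hℓa
      have h3 := mul_le_mul_of_nonneg_left hm (Nat.cast_nonneg (α := ℝ) q)
      rw [h2]
      linarith
    · exact ⟨0, fun ℓ hℓ hr => absurd ⟨ℓ, hℓ, hr⟩ h⟩
  choose C hC using hres
  obtain ⟨K, hK⟩ := ((Finset.range m).image C).bddAbove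
  have hlarge : ∀ᶠ ℓ : ℕ in atTop, 2 * K / ε < ℓ :=
    tendsto_natCast_atTop_atTop.eventually_gt_atTop _
  rw [eventually_inf_principal]
  filter_upwards [hlarge] with ℓ hℓ hℓL
  have hℓ0 : (0 : ℝ) < ℓ := by exact_mod_cast hpos ℓ hℓL
  have hCK : C (ℓ % m) ≤ K := hK (by
    simpa using ⟨ℓ % m, Nat.mod_lt _ (hpos m hmL), rfl⟩)
  have hlow := hC _ ℓ hℓL rfl
  have hup := hle ℓ hℓL
  rw [div_lt_iff₀ hε] at hℓ
  have e : 1 / (ℓ : ℝ) * u ℓ - T = (u ℓ - T * ℓ) / ℓ := by field_simp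
  rw [Real.dist_eq, e, abs_lt, lt_div_iff₀ hℓ0, div_lt_iff₀ hℓ0]
  constructor <;> nlinarith

theorem exists_nat_weights_entropy_gt {ι ρ : Type*} (s : Finset ι) (p c : ι → ℝ)
    (hp : ∀ i ∈ s, 0 < p i) (hp1 : ∑ i ∈ s, p i = 1) (a : ρ → ι → ℕ) (ξ : ρ → ℚ)
    (hmean : ∀ r, ∑ i ∈ s, p i * a r i = ξ r) {T : ℝ}
    (hT : T < ∑ i ∈ s, (p i * Real.log (c i) + Real.negMulLog (p i))) :
    ∃ n : ι → ℕ, (∀ i ∈ s, 0 < n i) ∧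
      (∀ r, ∑ i ∈ s, (n i : ℚ) * a r i = (∑ i ∈ s, n i : ℕ) * ξ r) ∧
      T * (∑ i ∈ s, n i : ℕ) < (∑ i ∈ s, n i : ℕ) * Real.log (∑ i ∈ s, n i : ℕ) -
        ∑ i ∈ s, n i * Real.log (n i) + ∑ i ∈ s, n i * Real.log (c i) := by
  obtain ⟨f, hf, hf1⟩ := exists_seq_ratLinearMap_tendsto_id
  have hlim : Tendsto (fun t => ∑ i ∈ s, ((f t (p i) : ℝ) * Real.log (c i) +
      Real.negMulLog (f t (p i)))) atTop
      (nhds (∑ i ∈ s, (p i * Real.log (c i) + Real.negMulLog (p i)))) :=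
    tendsto_finsetSum _ fun i _ => ((hf (p i)).mul_const _).add
      ((Real.continuous_negMulLog.tendsto _).comp (hf (p i)))
  have hpos : ∀ᶠ t in atTop, ∀ i ∈ s, (0 : ℝ) < f t (p i) :=
    (eventually_all_finset s).2 fun i hi => (hf (p i)).eventually_const_lt (hp i hi)
  obtain ⟨t, ht1, htT, htpos⟩ := (hf1.and ((hlim.eventually_const_lt hT).and hpos)).exists
  set w : ι → ℚ := fun i => f t (p i)
  have hrat : ∀ q : ℚ, f t q = q := fun q => by
    have := (f t).map_smul q 1
    rwa [ht1, Rat.smul_def, smul_eq_mul, mul_one, mul_one] at this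
  have hw0 : ∀ i ∈ s, 0 < w i := fun i hi => by exact_mod_cast htpos i hi
  have hw1 : ∑ i ∈ s, w i = 1 := by rw [← map_sum, hp1, ht1]
  have hwmean : ∀ r, ∑ i ∈ s, w i * a r i = ξ r := fun r => by
    rw [← hrat (ξ r), ← hmean r, map_sum]
    refine Finset.sum_congr rfl fun i _ => ?_
    rw [mul_comm (p i), ← nsmul_eq_mul, map_nsmul, nsmul_eq_mul, mul_comm]
  set D : ℕ := ∏ i ∈ s, (w i).den
  have hD : 0 < D := Finset.prod_pos fun i _ => (w i).den_pos
  have hn : ∀ i : ι, ∃ m : ℕ, i ∈ s → (m : ℚ) = D * w i := fun i => by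
    by_cases hi : i ∈ s
    · obtain ⟨e, he⟩ : (w i).den ∣ D := Finset.dvd_prod_of_mem (fun i => (w i).den) hi
      refine ⟨e * (w i).num.toNat, fun _ => ?_⟩
      have hnum : (((w i).num.toNat : ℤ) : ℚ) = (w i).num := by
        rw [Int.toNat_of_nonneg (Rat.num_nonneg.2 (hw0 i hi).le)]
      rw [he]
      push_cast at hnum ⊢
      rw [hnum, ← Rat.den_mul_eq_num]
      ring
    · exact ⟨0, fun h => absurd h hi⟩
  choose n hn using hn
  have hsum : ∑ i ∈ s, n i = D := by
    have : ((∑ i ∈ s, n i : ℕ) : ℚ) = D := by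
      rw [Nat.cast_sum, Finset.sum_congr rfl hn, ← Finset.mul_sum, hw1, mul_one]
    exact_mod_cast this
  have hD' : (0 : ℝ) < D := by exact_mod_cast hD
  have hnR : ∀ i ∈ s, (n i : ℝ) = D * w i := fun i hi => by exact_mod_cast hn i hi
  refine ⟨n, fun i hi => ?_, fun r => ?_, ?_⟩
  · have : (0 : ℚ) < n i := by
      rw [hn i hi]
      exact mul_pos (by exact_mod_cast hD) (hw0 i hi)
    exact_mod_cast this
  · rw [hsum, ← hwmean r, Finset.mul_sum]
    exact Finset.sum_congr rfl fun i hi => by rw [hn i hi, mul_assoc]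
  · have hlog : ∑ i ∈ s, (n i : ℝ) * Real.log (n i) =
        D * Real.log D + D * ∑ i ∈ s, (w i : ℝ) * Real.log (w i) := by
      have hw1' : ∑ i ∈ s, (w i : ℝ) = 1 := by exact_mod_cast hw1
      calc ∑ i ∈ s, (n i : ℝ) * Real.log (n i)
          = ∑ i ∈ s, (D * Real.log D * (w i : ℝ) + D * ((w i : ℝ) * Real.log (w i))) :=
            Finset.sum_congr rfl fun i hi => by
              rw [hnR i hi, Real.log_mul hD'.ne' (htpos i hi).ne']
              ring
        _ = _ := by rw [Finset.sum_add_distrib, ← Finset.mul_sum, ← Finset.mul_sum, hw1', mul_one]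
    have hc : ∑ i ∈ s, (n i : ℝ) * Real.log (c i) = D * ∑ i ∈ s, (w i : ℝ) * Real.log (c i) := by
      rw [Finset.mul_sum]
      exact Finset.sum_congr rfl fun i hi => by rw [hnR i hi, mul_assoc]
    have hF : ∑ i ∈ s, ((w i : ℝ) * Real.log (c i) + Real.negMulLog (w i)) =
        ∑ i ∈ s, (w i : ℝ) * Real.log (c i) - ∑ i ∈ s, (w i : ℝ) * Real.log (w i) := by
      rw [← Finset.sum_sub_distrib]
      exact Finset.sum_congr rfl fun i _ => by rw [Real.negMulLog]; ring
    rw [hF] at htT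
    rw [hsum, hlog, hc]
    linarith [mul_lt_mul_of_pos_left htT hD']

theorem exists_lt_log_coeff_pow {σ : Type*} {R : MvPolynomial σ ℝ}
    (hR : ∀ d, 0 ≤ R.coeff d) {p : (σ →₀ ℕ) → ℝ} (hp : ∀ d ∈ R.support, 0 < p d)
    (hp1 : ∑ d ∈ R.support, p d = 1) {ξ : σ → ℚ}
    (hmean : ∀ r, ∑ d ∈ R.support, p d * d r = ξ r) {T : ℝ}
    (hT : T < ∑ d ∈ R.support, (p d * Real.log (R.coeff d) + Real.negMulLog (p d))) :
    ∃ (m : ℕ) (v : σ →₀ ℕ), 0 < m ∧ (∀ r, (v r : ℚ) = m * ξ r) ∧ 0 < (R ^ m).coeff v ∧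
      T * m < Real.log ((R ^ m).coeff v) := by
  obtain ⟨n, hn, hnmean, hnT⟩ :=
    exists_nat_weights_entropy_gt R.support p (fun d => R.coeff d) hp hp1 (fun r d => d r) ξ hmean hT
  have hs : R.support.Nonempty := by
    by_contra h
    simp [Finset.not_nonempty_iff_eq_empty.1 h] at hp1
  have hc : ∀ d ∈ R.support, 0 < R.coeff d := fun d hd =>
    (hR d).lt_of_ne' (mem_support_iff.1 hd)
  have hlim := (tendsto_log_multinomial_div R.support n hn hs).add_const
    (∑ d ∈ R.support, n d * Real.log (R.coeff d))
  obtain ⟨k, hk, hk0⟩ := ((hlim.eventually_const_lt hnT).and (eventually_gt_atTop 0)).exists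
  have hk' : (0 : ℝ) < k := by exact_mod_cast hk0
  have hle := multinomial_mul_prod_coeff_pow_le_coeff_pow hR fun d => k * n d
  have hmpos : (0 : ℝ) < Nat.multinomial R.support fun d => k * n d := by
    exact_mod_cast Nat.multinomial_pos _ _
  have hprod : 0 < ∏ d ∈ R.support, R.coeff d ^ (k * n d) :=
    Finset.prod_pos fun d hd => pow_pos (hc d hd) _
  have hlow := mul_pos hmpos hprod
  refine ⟨∑ d ∈ R.support, k * n d, ∑ d ∈ R.support, (k * n d) • d,
    Finset.sum_pos (fun d hd => mul_pos hk0 (hn d hd)) hs, fun r => ?_, hlow.trans_le hle, ?_⟩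
  · rw [← Finset.mul_sum, Finsupp.finsetSum_apply]
    rw [Nat.cast_mul, mul_assoc, ← hnmean r, Finset.mul_sum]
    simp [mul_assoc]
  · refine lt_of_lt_of_le ?_ (Real.log_le_log hlow hle)
    rw [Real.log_mul hmpos.ne' hprod.ne', Real.log_prod fun d hd => (pow_pos (hc d hd) _).ne']
    simp_rw [Real.log_pow]
    have e : ∑ d ∈ R.support, ((k * n d : ℕ) : ℝ) * Real.log (R.coeff d) =
        k * ∑ d ∈ R.support, n d * Real.log (R.coeff d) := by
      rw [Finset.mul_sum]
      exact Finset.sum_congr rfl fun d _ => by push_cast; ring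
    rw [e, ← Finset.mul_sum]
    have h := mul_lt_mul_of_pos_left hk hk'
    rw [mul_add, mul_div_cancel₀ _ hk'.ne'] at h
    push_cast at h ⊢
    linarith

theorem mul_eval_pderiv {σ : Type*} [Fintype σ] (R : MvPolynomial σ ℝ) (x : σ → ℝ) (r : σ) :
    x r * eval x (pderiv r R) = ∑ d ∈ R.support, R.coeff d * (∏ i, x i ^ d i) * d r := by
  have h : X r * pderiv r R = ∑ d ∈ R.support, d r • monomial d (R.coeff d) := by
    conv_lhs => rw [R.as_sum, map_sum, Finset.mul_sum]
    exact Finset.sum_congr rfl fun d _ => X_mul_pderiv_monomial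
  have h' := congrArg (eval x) h
  rw [map_mul, eval_X, map_sum] at h'
  rw [h']
  refine Finset.sum_congr rfl fun d _ => ?_
  rw [map_nsmul, eval_monomial, Finsupp.prod_fintype _ _ fun i => pow_zero _, nsmul_eq_mul, mul_comm]

theorem natCast_num_toNat {q : ℚ} (hq : 0 ≤ q) (hden : q.den = 1) : (q.num.toNat : ℚ) = q := by
  have h : ((q.num.toNat : ℤ) : ℚ) = q.num := by
    rw [Int.toNat_of_nonneg (Rat.num_nonneg.2 hq)]
  rw [Int.cast_natCast] at h
  rw [h, Rat.coe_int_num_of_den_eq_one hden]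

/-- Let `R` be a polynomial in `M` variables with nonnegative real
coefficients, `ξ` a vector of positive rationals, and let `L` be the (nonempty)
set of positive integers `ℓ` with `ξ_r ℓ ∈ ℤ` for all `r` and
`Coeff[R^ℓ, x^{ξℓ}] > 0`.  If `x₀` is a strictly positive vector satisfying
`x₀_r ∂R/∂x_r(x₀) = ξ_r R(x₀)` for all `r`, then `(1/ℓ) log Coeff[R^ℓ, x^{ξℓ}]`
tends, as `ℓ → ∞` along `L`, to `log R(x₀) - ∑_r ξ_r log x₀_r`. -/
theorem stmt_5 (M : ℕ) (hM : 1 ≤ M) (R : MvPolynomial (Fin M) ℝ)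
    (hR : ∀ d : Fin M →₀ ℕ, 0 ≤ R.coeff d)
    (ξ : Fin M → ℚ) (hξ : ∀ r, 0 < ξ r)
    (L : Set ℕ)
    (hL : L = {ℓ : ℕ | 0 < ℓ ∧ (∀ r, ((ℓ : ℚ) * ξ r).den = 1) ∧
      0 < (R ^ ℓ).coeff (Finsupp.equivFunOnFinite.symm fun r => ((ℓ : ℚ) * ξ r).num.toNat)})
    (hLne : L.Nonempty)
    (x0 : Fin M → ℝ) (hx0 : ∀ r, 0 < x0 r)
    (heq : ∀ r, x0 r * MvPolynomial.eval x0 (MvPolynomial.pderiv r R) =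
      (ξ r : ℝ) * MvPolynomial.eval x0 R) :
    Filter.Tendsto
      (fun ℓ : ℕ => (1 / ℓ : ℝ) *
        Real.log ((R ^ ℓ).coeff (Finsupp.equivFunOnFinite.symm fun r => ((ℓ : ℚ) * ξ r).num.toNat)))
      (Filter.atTop ⊓ Filter.principal L)
      (nhds (Real.log (MvPolynomial.eval x0 R) - ∑ r, (ξ r : ℝ) * Real.log (x0 r))) := by
  set v : ℕ → Fin M →₀ ℕ := fun ℓ =>
    Finsupp.equivFunOnFinite.symm fun r => ((ℓ : ℚ) * ξ r).num.toNat with hvdef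
  have hv_of_eq : ∀ (ℓ : ℕ) (u : Fin M →₀ ℕ), (∀ r, (u r : ℚ) = ℓ * ξ r) →
      (∀ r, ((ℓ : ℚ) * ξ r).den = 1) ∧ v ℓ = u := fun ℓ u hu => by
    refine ⟨fun r => by rw [← hu r, Rat.den_natCast], Finsupp.ext fun r => ?_⟩
    simp [v, ← hu r]
  have hL' : ∀ ℓ, ℓ ∈ L ↔ 0 < ℓ ∧ (∀ r, (v ℓ r : ℚ) = ℓ * ξ r) ∧ 0 < (R ^ ℓ).coeff (v ℓ) := by
    intro ℓ
    rw [hL]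
    refine and_congr_right fun _ => and_congr_left fun _ => ⟨fun h r => ?_, fun h => ?_⟩
    · exact natCast_num_toNat (mul_nonneg (Nat.cast_nonneg _) (hξ r).le) (h r)
    · exact (hv_of_eq ℓ (v ℓ) h).1
  have hx0' : ∀ d : Fin M →₀ ℕ, 0 < ∏ r, x0 r ^ d r := fun d =>
    Finset.prod_pos fun r _ => pow_pos (hx0 r) _
  have hlogx : ∀ d : Fin M →₀ ℕ, Real.log (∏ r, x0 r ^ d r) = ∑ r, d r * Real.log (x0 r) := by
    intro d
    rw [Real.log_prod fun r _ => (pow_pos (hx0 r) _).ne']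
    simp_rw [Real.log_pow]
  have hc : ∀ d ∈ R.support, 0 < R.coeff d := fun d hd =>
    (hR d).lt_of_ne' (mem_support_iff.1 hd)
  have hE : 0 < eval x0 R := by
    obtain ⟨ℓ, hℓ⟩ := hLne
    obtain ⟨hℓ0, -, hℓc⟩ := (hL' ℓ).1 hℓ
    have hR0 : R ≠ 0 := by
      rintro rfl
      simp [zero_pow hℓ0.ne'] at hℓc
    rw [eval_eq']
    exact Finset.sum_pos (fun d hd => mul_pos (hc d hd) (hx0' d)) (support_nonempty.2 hR0)
  set p : (Fin M →₀ ℕ) → ℝ := fun d => R.coeff d * (∏ r, x0 r ^ d r) / eval x0 R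
  have hp : ∀ d ∈ R.support, 0 < p d := fun d hd => div_pos (mul_pos (hc d hd) (hx0' d)) hE
  have hp1 : ∑ d ∈ R.support, p d = 1 := by
    rw [← Finset.sum_div, ← eval_eq', div_self hE.ne']
  have hmean : ∀ r, ∑ d ∈ R.support, p d * d r = ξ r := fun r => by
    simp_rw [p, div_mul_eq_mul_div]
    rw [← Finset.sum_div, ← mul_eval_pderiv, heq, mul_div_cancel_right₀ _ hE.ne']
  have hT : ∑ d ∈ R.support, (p d * Real.log (R.coeff d) + Real.negMulLog (p d)) =
      Real.log (eval x0 R) - ∑ r, (ξ r : ℝ) * Real.log (x0 r) := by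
    calc ∑ d ∈ R.support, (p d * Real.log (R.coeff d) + Real.negMulLog (p d))
        = ∑ d ∈ R.support, (p d * Real.log (eval x0 R) -
            ∑ r, p d * d r * Real.log (x0 r)) := by
          refine Finset.sum_congr rfl fun d hd => ?_
          have hlogp : Real.log (p d) = Real.log (R.coeff d) + ∑ r, d r * Real.log (x0 r) -
              Real.log (eval x0 R) := by
            rw [Real.log_div (mul_pos (hc d hd) (hx0' d)).ne' hE.ne',
              Real.log_mul (hc d hd).ne' (hx0' d).ne', hlogx]
          simp_rw [mul_assoc]
          rw [Real.negMulLog, hlogp, ← Finset.mul_sum]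
          ring
      _ = _ := by
          rw [Finset.sum_sub_distrib, ← Finset.sum_mul, hp1, one_mul, Finset.sum_comm]
          simp_rw [← Finset.sum_mul, hmean]
  refine tendsto_div_of_superadditive (fun ℓ hℓ => ((hL' ℓ).1 hℓ).1) (fun a ha b hb => ?_)
    (fun ℓ hℓ => ?_) fun ε hε => ?_
  · obtain ⟨ha0, hav, hac⟩ := (hL' a).1 ha
    obtain ⟨hb0, hbv, hbc⟩ := (hL' b).1 hb
    have hab : v (a + b) = v a + v b := (hv_of_eq _ _ fun r => by
      rw [Finsupp.add_apply, Nat.cast_add, hav, hbv]; push_cast; ring).2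
    have hle := coeff_mul_coeff_le_coeff_mul (coeff_pow_nonneg hR a) (coeff_pow_nonneg hR b)
      (v a) (v b)
    rw [← pow_add, ← hab] at hle
    refine ⟨(hL' _).2 ⟨by omega, fun r => ?_, (mul_pos hac hbc).trans_le hle⟩, ?_⟩
    · rw [hab, Finsupp.add_apply, Nat.cast_add, hav, hbv]; push_cast; ring
    · rw [← Real.log_mul hac.ne' hbc.ne']
      exact Real.log_le_log (mul_pos hac hbc) hle
  · obtain ⟨hℓ0, hℓv, hℓc⟩ := (hL' ℓ).1 hℓ
    have hle := Real.log_le_log (mul_pos hℓc (hx0' _))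
      (coeff_mul_prod_pow_le_eval (coeff_pow_nonneg hR ℓ) hx0 (v ℓ))
    rw [Real.log_mul hℓc.ne' (hx0' _).ne', hlogx, map_pow, Real.log_pow] at hle
    have hsum : ∑ r, (v ℓ r : ℝ) * Real.log (x0 r) = ℓ * ∑ r, (ξ r : ℝ) * Real.log (x0 r) := by
      rw [Finset.mul_sum]
      refine Finset.sum_congr rfl fun r _ => ?_
      have : (v ℓ r : ℝ) = ℓ * ξ r := by exact_mod_cast congrArg (Rat.cast (K := ℝ)) (hℓv r)
      rw [this, mul_assoc]
    rw [hsum] at hle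
    linarith
  · obtain ⟨m, u, hm0, hu, hpos, hlt⟩ :=
      exists_lt_log_coeff_pow hR hp hp1 hmean ((sub_lt_self _ hε).trans_eq hT.symm)
    obtain rfl : v m = u := (hv_of_eq m u hu).2
    exact ⟨m, (hL' m).2 ⟨hm0, hu, hpos⟩, hlt.le⟩
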